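/- Let t₁ = 2π − 2·arctan(e^π) and t₂ = 2π − 2·arctan(e^{−π}). Then π < t₁ < t₂ < 2π, and the boundary values of Φ(ζ) = (1/π)·Log((1+ζ)/(1−ζ)) + i/2 (principal branch Log) satisfy Φ(e^{it₁}) = −1 and Φ(e^{it₂}) = 1. -/

import Mathlib

/-!
On the unit circle `(1 + e^{it}) / (1 - e^{it}) = i cot (t / 2)`. On the lower open semicircle the
cotangent is negative, so this value lies on the negative imaginary axis and its principal
logarithm is `log (-cot (t / 2)) - iπ / 2`; the summand `i / 2` then cancels the imaginary part of
`Φ`. At `t = 2π - 2 arctan x` with `x > 0` one has `cot (t / 2) = -1 / x`, hence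
`Φ(e^{it}) = -log x / π`, and `x = e^{±π}` gives `∓1`.
-/

open Complex Real

/-- The map `Φ(ζ) = (1/π) Log ((1 + ζ) / (1 - ζ)) + i/2` carrying the open unit disk conformally
onto the strip `0 < Im w < 1`. The same formula gives its boundary values on the unit circle minus
`±1`; at `ζ = ±1` it has the junk value `i/2`. -/
noncomputable def diskToStrip (ζ : ℂ) : ℂ :=
  (1 / (π : ℂ)) * Complex.log ((1 + ζ) / (1 - ζ)) + I / 2

lemma one_add_exp_I_mul_div_one_sub_exp_I_mul (z : ℂ) :
    (1 + Complex.exp (I * z)) / (1 - Complex.exp (I * z)) = I * Complex.cot (z / 2) := by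
  have h_double : 2 * I * (z / 2) = I * z := by ring
  rw [Complex.cot_eq_exp_ratio, h_double, add_comm, mul_div_assoc', mul_div_mul_left _ _ I_ne_zero]

lemma log_I_mul_ofReal_of_neg {r : ℝ} (hr : r < 0) :
    Complex.log (I * r) = Real.log (-r) - π / 2 * I := by
  have h_polar : I * r = ((-r : ℝ) : ℂ) * -I := by push_cast; ring
  rw [h_polar, log_ofReal_mul (neg_pos.2 hr) (neg_ne_zero.2 I_ne_zero), log_neg_I]
  ring

lemma diskToStrip_exp_I_mul_of_cot_neg {t : ℝ} (ht : Real.cot (t / 2) < 0) :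
    diskToStrip (Complex.exp (I * t)) = Real.log (-Real.cot (t / 2)) / π := by
  have hπ : (π : ℂ) ≠ 0 := ofReal_ne_zero.2 pi_ne_zero
  have h_cot : Complex.cot (t / 2) = Real.cot (t / 2) := by
    rw [ofReal_cot, ofReal_div, ofReal_ofNat]
  rw [diskToStrip, one_add_exp_I_mul_div_one_sub_exp_I_mul, h_cot, log_I_mul_ofReal_of_neg ht]
  field_simp
  ring

lemma cot_pi_sub_arctan (x : ℝ) : Real.cot (π - Real.arctan x) = -x⁻¹ := by
  rw [← Real.tan_inv_eq_cot, Real.tan_pi_sub, Real.tan_arctan, inv_neg]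

lemma diskToStrip_exp_I_mul_two_pi_sub_two_mul_arctan {x : ℝ} (hx : 0 < x) :
    diskToStrip (Complex.exp (I * ((2 * π - 2 * Real.arctan x : ℝ) : ℂ))) = -Real.log x / π := by
  have h_cot : Real.cot ((2 * π - 2 * Real.arctan x) / 2) = -x⁻¹ := by
    rw [← cot_pi_sub_arctan]
    congr 1
    ring
  have h_neg : Real.cot ((2 * π - 2 * Real.arctan x) / 2) < 0 := by
    rw [h_cot]
    exact neg_neg_of_pos (inv_pos.2 hx)
  rw [diskToStrip_exp_I_mul_of_cot_neg h_neg, h_cot, neg_neg, Real.log_inv, ofReal_neg]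

lemma diskToStrip_exp_I_mul_two_pi_sub_two_mul_arctan_exp (x : ℝ) :
    diskToStrip (Complex.exp (I * ((2 * π - 2 * Real.arctan (Real.exp x) : ℝ) : ℂ))) = -x / π := by
  rw [diskToStrip_exp_I_mul_two_pi_sub_two_mul_arctan (Real.exp_pos x), Real.log_exp]

/-- With `t₁ = 2π − 2·arctan(e^π)` and `t₂ = 2π − 2·arctan(e^{−π})`, one has
`π < t₁ < t₂ < 2π`, and the boundary values of
`Φ(ζ) = (1/π)·Log((1+ζ)/(1−ζ)) + i/2` satisfy `Φ(e^{it₁}) = −1`, `Φ(e^{it₂}) = 1`. -/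
theorem stmt_14 :
    π < 2 * π - 2 * Real.arctan (Real.exp π) ∧
    2 * π - 2 * Real.arctan (Real.exp π) < 2 * π - 2 * Real.arctan (Real.exp (-π)) ∧
    2 * π - 2 * Real.arctan (Real.exp (-π)) < 2 * π ∧
    (1 / (π : ℂ)) *
        Complex.log
          ((1 + Complex.exp (Complex.I * ((2 * π - 2 * Real.arctan (Real.exp π) : ℝ) : ℂ))) /
            (1 - Complex.exp (Complex.I * ((2 * π - 2 * Real.arctan (Real.exp π) : ℝ) : ℂ)))) +
      Complex.I / 2 = -1 ∧
    (1 / (π : ℂ)) *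
        Complex.log
          ((1 + Complex.exp (Complex.I * ((2 * π - 2 * Real.arctan (Real.exp (-π)) : ℝ) : ℂ))) /
            (1 - Complex.exp (Complex.I * ((2 * π - 2 * Real.arctan (Real.exp (-π)) : ℝ) : ℂ)))) +
      Complex.I / 2 = 1 := by
  have hπ : (π : ℂ) ≠ 0 := ofReal_ne_zero.2 pi_ne_zero
  have h_lt_pi_div_two : Real.arctan (Real.exp π) < π / 2 := Real.arctan_lt_pi_div_two _
  have h_lt : Real.arctan (Real.exp (-π)) < Real.arctan (Real.exp π) :=
    Real.arctan_strictMono (Real.exp_lt_exp.2 (neg_lt_self pi_pos))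
  have h_pos : 0 < Real.arctan (Real.exp (-π)) := Real.arctan_pos.2 (Real.exp_pos _)
  refine ⟨by linarith, by linarith, by linarith, ?_, ?_⟩
  · exact (diskToStrip_exp_I_mul_two_pi_sub_two_mul_arctan_exp π).trans (by field_simp)
  · exact (diskToStrip_exp_I_mul_two_pi_sub_two_mul_arctan_exp (-π)).trans
      (by push_cast; field_simp)
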